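/- Let n = 2k−1 ≥ 3 be odd and let p and q be odd integers ≥ 2 that are relatively prime. Then for every choice of parameters ℓ₁,…,ℓ_k (each coprime to p) and ℓ'₁,…,ℓ'_k (each coprime to q), cat(L^n_p(ℓ₁,…,ℓ_k) × L^n_q(ℓ'₁,…,ℓ'_k)) ≤ 2n − 2. -/

import Mathlib

open scoped Topology

/-- The Lusternik–Schnirelmann category of a space (normalized so that contractible spaces
have category 0): the least `k` such that `X` admits an open cover by `k+1` sets, each of
which has nullhomotopic inclusion into `X` (i.e. is contractible in `X`). -/
noncomputable def lsCat (X : Type*) [TopologicalSpace X] : ℕ :=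
  sInf {k : ℕ | ∃ U : Fin (k + 1) → Set X,
    (∀ i, IsOpen (U i)) ∧ (⋃ i, U i) = Set.univ ∧
    ∀ i, ContinuousMap.Nullhomotopic
      (⟨Subtype.val, continuous_subtype_val⟩ : C(U i, X))}

/-- The orbit relation on the unit sphere of `ℂ^k` defining the lens space
`L^{2k-1}_p(ℓ₁,…,ℓ_k)`: a fixed generator of `ℤ/p` acts coordinatewise by
`z_j ↦ exp(2πiℓ_j/p) z_j`, and `m` ranges over the powers of this generator. -/
def lensRel (p k : ℕ) (ℓ : Fin k → ℤ) :
    Metric.sphere (0 : EuclideanSpace ℂ (Fin k)) 1 →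
      Metric.sphere (0 : EuclideanSpace ℂ (Fin k)) 1 → Prop :=
  fun x y => ∃ m : ℤ, ∀ j : Fin k,
    (y.1 j) = Complex.exp (2 * Real.pi * Complex.I * m * ℓ j / p) * (x.1 j)

/-- The lens space `L^{2k-1}_p(ℓ₁,…,ℓ_k)`: the orbit space of the free linear action of `ℤ/p`
on the unit sphere `S^{2k-1} ⊆ ℂ^k` determined by the parameters `ℓ`, with the quotient
topology. -/
noncomputable def LensSpace (p k : ℕ) (ℓ : Fin k → ℤ) : Type :=
  Quot (lensRel p k ℓ)

noncomputable instance (p k : ℕ) (ℓ : Fin k → ℤ) : TopologicalSpace (LensSpace p k ℓ) :=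
  inferInstanceAs (TopologicalSpace (Quot (lensRel p k ℓ)))

/-! ### Roots of unity and sectors -/

/-- The unit complex number with angle `2πx`. -/
noncomputable def ee (x : ℝ) : ℂ := Complex.exp (((2 * Real.pi * x : ℝ) : ℂ) * Complex.I)

theorem ee_add (x y : ℝ) : ee (x + y) = ee x * ee y := by
  unfold ee; rw [← Complex.exp_add]; congr 1; push_cast; ring

theorem ee_zero : ee 0 = 1 := by simp [ee]

theorem norm_ee (x : ℝ) : ‖ee x‖ = 1 := Complex.norm_exp_ofReal_mul_I _

theorem ee_ne_zero (x : ℝ) : ee x ≠ 0 := Complex.exp_ne_zero _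

theorem ee_eq_one_iff (x : ℝ) : ee x = 1 ↔ ∃ n : ℤ, x = n := by
  unfold ee
  rw [Complex.exp_eq_one_iff]
  have hpi : (Real.pi : ℂ) ≠ 0 := by exact_mod_cast Real.pi_ne_zero
  constructor
  · rintro ⟨n, hn⟩
    refine ⟨n, ?_⟩
    have h : (2 * Real.pi * Complex.I : ℂ) * (x : ℂ) = (2 * Real.pi * Complex.I : ℂ) * (n : ℂ) := by
      push_cast at hn; linear_combination hn
    have h2 := mul_left_cancel₀ (by simp [hpi] : (2 * Real.pi * Complex.I : ℂ) ≠ 0) h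
    exact_mod_cast h2
  · rintro ⟨n, rfl⟩
    exact ⟨n, by push_cast; ring⟩

theorem ee_pow (x : ℝ) (n : ℕ) : ee x ^ n = ee (n * x) := by
  unfold ee; rw [← Complex.exp_nat_mul]; congr 1; push_cast; ring

theorem ee_neg_conj (x : ℝ) : (starRingEnd ℂ) (ee x) = ee (-x) := by
  unfold ee; rw [← Complex.exp_conj, map_mul, Complex.conj_ofReal, Complex.conj_I]; congr 1; push_cast; ring

theorem ee_half : ee (1 / 2) = -1 := by
  unfold ee
  rw [← Complex.exp_pi_mul_I]; congr 1; push_cast; ring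

theorem ee_add_int (x : ℝ) (n : ℤ) : ee (x + n) = ee x := by
  rw [ee_add, (ee_eq_one_iff (n : ℝ)).2 ⟨n, rfl⟩, mul_one]

/-- Open sector around the positive half-axis with half-angle `π/N`. -/
def sec (N : ℕ) : Set ℂ := {v | v ≠ 0 ∧ |Complex.arg v| < Real.pi / N}

theorem mem_sec_polar {N : ℕ} (hN : 2 ≤ N) {r x : ℝ} (hr : 0 < r) (hx : |x| < 1 / (2 * N)) :
    (r : ℂ) * ee x ∈ sec N := by
  have hN0 : (2 : ℝ) ≤ N := by exact_mod_cast hN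
  have hpi := Real.pi_pos
  have h1 : |2 * Real.pi * x| < Real.pi / N := by
    rw [abs_mul, abs_of_pos (by positivity)]
    calc 2 * Real.pi * |x| < 2 * Real.pi * (1 / (2 * N)) := by gcongr
      _ = Real.pi / N := by field_simp
  have h2 : Real.pi / N < Real.pi := by
    rw [div_lt_iff₀ (by linarith)]; nlinarith
  refine ⟨mul_ne_zero (by exact_mod_cast hr.ne') (ee_ne_zero _), ?_⟩
  have h3 := abs_lt.1 h1
  have : Complex.arg ((r : ℂ) * ee x) = 2 * Real.pi * x := by
    unfold ee
    rw [Complex.exp_mul_I]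
    exact Complex.arg_mul_cos_add_sin_mul_I hr ⟨by linarith, by linarith⟩
  rw [this]; exact h1

theorem polar_of_mem_sec {N : ℕ} {v : ℂ} (h : v ∈ sec N) (hN : 2 ≤ N) :
    ∃ r x : ℝ, 0 < r ∧ |x| < 1 / (2 * N) ∧ v = (r : ℂ) * ee x := by
  have hN0 : (2 : ℝ) ≤ N := by exact_mod_cast hN
  have hpi := Real.pi_pos
  refine ⟨‖v‖, v.arg / (2 * Real.pi), norm_pos_iff.2 h.1, ?_, ?_⟩
  · rw [abs_div, abs_of_pos (by positivity : 0 < 2 * Real.pi), div_lt_iff₀ (by positivity)]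
    calc _ < Real.pi / N := h.2
      _ = _ := by field_simp
  · unfold ee
    rw [mul_div_cancel₀ _ (by positivity : 2 * Real.pi ≠ 0), Complex.norm_mul_exp_arg_mul_I]

theorem isOpen_sec {N : ℕ} (hN : 2 ≤ N) : IsOpen (sec N) := by
  have hN0 : (2 : ℝ) ≤ N := by exact_mod_cast hN
  have hpi := Real.pi_pos
  have h2 : Real.pi / N < Real.pi := by
    rw [div_lt_iff₀ (by linarith)]; nlinarith
  rw [isOpen_iff_mem_nhds]
  rintro v ⟨h0, hv⟩
  have hs : v ∈ Complex.slitPlane := by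
    rw [Complex.mem_slitPlane_iff_arg]
    refine ⟨fun h => ?_, h0⟩
    rw [h, abs_of_pos hpi] at hv; linarith
  have hc := (Complex.continuousAt_arg hs).abs
  filter_upwards [hc.eventually_lt continuousAt_const hv, isOpen_ne.mem_nhds h0] with a ha hb
  exact ⟨hb, ha⟩

/-- The two kinds of sectors. -/
def secE (N : ℕ) (ε : Bool) : Set ℂ :=
  {v | ee (-(if ε then 1 / (2 * (N : ℝ)) else 0)) * v ∈ sec N}

theorem isOpen_secE {N : ℕ} (hN : 2 ≤ N) (ε : Bool) : IsOpen (secE N ε) :=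
  (isOpen_sec hN).preimage (by fun_prop)

theorem sec_rigid {N : ℕ} (hN : 2 ≤ N) {v : ℂ} {y : ℝ} (hy : ∃ n : ℤ, N * y = n)
    (h : v ∈ sec N) (h' : ee y * v ∈ sec N) : ee y = 1 := by
  obtain ⟨r, x, hr, hx, rfl⟩ := polar_of_mem_sec h hN
  obtain ⟨r', x', hr', hx', he⟩ := polar_of_mem_sec h' hN
  have hN0 : (0 : ℝ) < N := by have : (2 : ℝ) ≤ N := by exact_mod_cast hN
                               linarith
  have hrr : r = r' := by
    have := congrArg norm he
    simpa [norm_ee, abs_of_pos hr, abs_of_pos hr'] using this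
  subst hrr
  have hr0 : (r : ℂ) ≠ 0 := by exact_mod_cast hr.ne'
  have he2 : ee y * ee x = ee x' := by
    apply mul_left_cancel₀ hr0
    rw [← he]; ring
  have he3 : ee (y + x - x') = 1 := by
    have h1 : ee (y + x - x') * ee x' = ee x' := by
      rw [← ee_add, ← he2, ← ee_add]; congr 1; ring
    exact mul_right_cancel₀ (ee_ne_zero x') (by rw [h1, one_mul])
  obtain ⟨n, hn⟩ := (ee_eq_one_iff _).1 he3
  obtain ⟨m, hm⟩ := hy
  have h5 : |x' - x| < 1 / N := by
    calc |x' - x| ≤ |x'| + |x| := abs_sub _ _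
      _ < 1 / (2 * N) + 1 / (2 * N) := by gcongr
      _ = 1 / N := by field_simp; norm_num
  have h6 : ((m - N * n : ℤ) : ℝ) = N * (x' - x) := by
    push_cast; rw [← hm, ← hn]; ring
  have h7 : |((m - N * n : ℤ) : ℝ)| < 1 := by
    rw [h6, abs_mul, abs_of_pos hN0]
    calc N * |x' - x| < N * (1 / N) := by gcongr
      _ = 1 := by field_simp
  have h8 : (m - N * n : ℤ) = 0 := by
    rw [← Int.abs_lt_one_iff]; exact_mod_cast h7
  rw [ee_eq_one_iff]
  refine ⟨n, ?_⟩
  have h9 : (m : ℝ) = N * n := by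
    have : (m : ℤ) = N * n := by linarith
    exact_mod_cast this
  rw [h9] at hm
  exact mul_left_cancel₀ hN0.ne' hm

theorem secE_rigid {N : ℕ} (hN : 2 ≤ N) {v : ℂ} {y : ℝ} (ε : Bool) (hy : ∃ n : ℤ, N * y = n)
    (h : v ∈ secE N ε) (h' : ee y * v ∈ secE N ε) : ee y = 1 := by
  unfold secE at h h'
  simp only [Set.mem_ofPred_eq] at h h'
  rw [mul_left_comm] at h'
  exact sec_rigid hN hy h h'

theorem secE_cover {N : ℕ} (hN : 2 ≤ N) {v : ℂ} (hv : v ≠ 0) :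
    ∃ (j : ℤ) (ε : Bool), ee (j / N) * v ∈ secE N ε := by
  have hpi := Real.pi_pos
  have hN0 : (0 : ℝ) < N := by have : (2 : ℝ) ≤ N := by exact_mod_cast hN
                               linarith
  set x : ℝ := v.arg / (2 * Real.pi) with hx
  have hvx : v = (‖v‖ : ℂ) * ee x := by
    unfold ee
    rw [hx, mul_div_cancel₀ _ (by positivity : 2 * Real.pi ≠ 0), Complex.norm_mul_exp_arg_mul_I]
  have hn : 0 < ‖v‖ := norm_pos_iff.2 hv
  have hf0 := Int.fract_nonneg (N * x)
  have hf1 := Int.fract_lt_one (N * x)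
  have hff := Int.floor_add_fract (N * x)
  set y := Int.fract (N * x) with hy
  refine ⟨-⌊N * x⌋, decide (y ≠ 0), ?_⟩
  have key : x = (⌊N * x⌋ : ℝ) / N + y / N := by rw [← add_div, hff]; field_simp
  have e1 : ∀ a : ℝ, ee (-a) * (ee (((-⌊N * x⌋ : ℤ) : ℝ) / N) * v)
      = (‖v‖ : ℂ) * ee (y / N - a) := by
    intro a
    have : y / N - a = -a + (((-⌊N * x⌋ : ℤ) : ℝ) / N + x) := by
      push_cast
      rw [neg_div]; linarith
    rw [this, ee_add, ee_add]
    conv_lhs => rw [hvx]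
    ring
  unfold secE
  rw [Set.mem_ofPred_eq, e1]
  apply mem_sec_polar hN hn
  by_cases h0 : y = 0
  · simp [h0]; omega
  · have hy0 : 0 < y := lt_of_le_of_ne hf0 (Ne.symm h0)
    simp only [ne_eq, h0, not_false_eq_true, decide_true, if_true]
    rw [abs_lt]
    constructor
    · have : 0 < y / N := by positivity
      linarith
    · have : y / N < 1 / N := by gcongr
      have h2 : (1 : ℝ) / N = 1 / (2 * N) + 1 / (2 * N) := by field_simp; norm_num
      linarith

theorem secE_not_good {p q : ℕ} (hp : 3 ≤ p) (hq : 1 ≤ q) {v : ℂ} {ε : Bool}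
    (h : v ∈ secE (p * q) ε) : -(1 / 2) * ‖v‖ ^ q ≤ (v ^ q).re := by
  have hN : 2 ≤ p * q := by nlinarith
  have hp0 : (3 : ℝ) ≤ p := by exact_mod_cast hp
  have hq0 : (1 : ℝ) ≤ q := by exact_mod_cast hq
  unfold secE at h
  rw [Set.mem_ofPred_eq] at h
  obtain ⟨r, x, hr, hx, he⟩ := polar_of_mem_sec h hN
  set a : ℝ := if ε then 1 / (2 * ((p * q : ℕ) : ℝ)) else 0 with ha
  have hv : v = (r : ℂ) * ee (x + a) := by
    have : ee a * (ee (-a) * v) = v := by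
      rw [← mul_assoc, ← ee_add, add_neg_cancel, ee_zero, one_mul]
    rw [← this, he, ee_add]; ring
  have ha0 : 0 ≤ a ∧ a ≤ 1 / (2 * ((p * q : ℕ) : ℝ)) := by
    rw [ha]; split_ifs
    · exact ⟨by positivity, le_refl _⟩
    · exact ⟨le_refl _, by positivity⟩
  have hb : |x + a| ≤ 1 / (p * q) := by
    calc |x + a| ≤ |x| + |a| := abs_add_le _ _
      _ ≤ 1 / (2 * ((p * q : ℕ) : ℝ)) + 1 / (2 * ((p * q : ℕ) : ℝ)) := by
        rw [abs_of_nonneg ha0.1]; linarith [ha0.2]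
      _ = _ := by push_cast; field_simp; norm_num
  have hc : |q * (x + a)| ≤ 1 / 3 := by
    rw [abs_mul, abs_of_nonneg (by linarith)]
    calc q * |x + a| ≤ q * (1 / (p * q)) := by gcongr
      _ = 1 / p := by field_simp
      _ ≤ 1 / 3 := by gcongr
  have hnorm : ‖v‖ = r := by rw [hv, norm_mul, norm_ee]; simp [abs_of_pos hr]
  rw [hnorm, hv, mul_pow, ee_pow]
  have hre : ((r : ℂ) ^ q * ee (q * (x + a))).re = r ^ q * Real.cos (2 * Real.pi * (q * (x + a))) := by
    rw [← Complex.ofReal_pow, Complex.re_ofReal_mul]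
    unfold ee
    rw [Complex.exp_ofReal_mul_I_re]
  rw [hre]
  have hcos : -(1 / 2) ≤ Real.cos (2 * Real.pi * (q * (x + a))) := by
    rw [← Real.cos_abs, abs_mul, abs_of_pos (by positivity : 0 < 2 * Real.pi)]
    have h1 : Real.cos (Real.pi - Real.pi / 3) = -(1 / 2) := by
      rw [Real.cos_pi_sub, Real.cos_pi_div_three]
    rw [← h1]
    apply Real.cos_le_cos_of_nonneg_of_le_pi
    · positivity
    · linarith [Real.pi_pos]
    · nlinarith [Real.pi_pos]
  have : 0 < r ^ q := by positivity
  nlinarith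

/-! ### The algebraic map without zeros -/

/-- The forms: index `0` is the hermitian product, index `m > 0` is the sum of Plücker
coordinates with index sum `m`. -/
noncomputable def form (k : ℕ) (c : ℕ) (x y : Fin k → ℂ) : ℂ :=
  if c = 0 then ∑ i, x i * (starRingEnd ℂ) (y i)
  else ∑ a ∈ (Finset.univ : Finset (Fin k × Fin k)).filter
    (fun a => a.1 < a.2 ∧ (a.1 : ℕ) + (a.2 : ℕ) = c), (x a.1 * y a.2 - x a.2 * y a.1)

theorem exists_form_ne_zero {k : ℕ} (hk : 2 ≤ k) {x y : Fin k → ℂ} (hx : x ≠ 0) (hy : y ≠ 0) :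
    ∃ c < 2 * k - 2, form k c x y ≠ 0 := by
  by_contra! hcon
  have hP : ∀ m : ℕ, ∀ i j : Fin k, (i : ℕ) + j = m → i < j → x i * y j - x j * y i = 0 := by
    intro m
    induction m using Nat.strong_induction_on with
    | _ m ih =>
    have ih' : ∀ i j : Fin k, (i : ℕ) + j < m → x i * y j - x j * y i = 0 := by
      intro i j hij
      rcases lt_trichotomy i j with h | h | h
      · exact ih _ hij i j rfl h
      · subst h; ring
      · have := ih _ (by omega) j i rfl h
        linear_combination -this
    by_contra! hne
    obtain ⟨i, j, hij, hlt, hne⟩ := hne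
    have hltn : (i : ℕ) < j := hlt
    have hj := j.2
    have h0 := hcon m (by omega)
    unfold form at h0
    rw [if_neg (by omega), Finset.sum_eq_single (i, j)] at h0
    · exact hne h0
    · rintro ⟨i', j'⟩ hb hbne
      simp only [Finset.mem_filter, Finset.mem_univ, true_and] at hb
      obtain ⟨hb1, hb2⟩ := hb
      have hb1n : (i' : ℕ) < j' := hb1
      have hii : (i : ℕ) ≠ i' := by
        intro h
        apply hbne
        have h1 : i' = i := Fin.ext h.symm
        have h2 : j' = j := Fin.ext (by omega)
        rw [h1, h2]
      have hprod : (x i * y j - x j * y i) * (x i' * y j' - x j' * y i') = 0 := by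
        rcases lt_or_gt_of_ne hii with h | h
        · have e1 := ih' i i' (by omega)
          have e2 := ih' i j' (by omega)
          linear_combination (x j * y j' - x j' * y j) * e1 - (x j * y i' - x i' * y j) * e2
        · have e1 := ih' i' i (by omega)
          have e2 := ih' i' j (by omega)
          linear_combination (x j' * y j - x j * y j') * e1 - (x j' * y i - x i * y j') * e2
      exact (mul_eq_zero.1 hprod).resolve_left hne
    · intro h
      exact absurd (by simp [hlt, hij]) h
  have hP' : ∀ i j : Fin k, x i * y j = x j * y i := by
    intro i j
    rcases lt_trichotomy i j with h | h | h
    · linear_combination hP _ i j rfl h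
    · subst h; ring
    · linear_combination - hP _ j i rfl h
  obtain ⟨j, hj⟩ := Function.ne_iff.1 hy
  obtain ⟨i, hi⟩ := Function.ne_iff.1 hx
  simp only [Pi.zero_apply] at hi hj
  have h0 := hcon 0 (by omega)
  unfold form at h0
  rw [if_pos rfl] at h0
  have h1 : x j * ∑ i, y i * (starRingEnd ℂ) (y i) = 0 := by
    rw [← mul_zero (y j), ← h0, Finset.mul_sum, Finset.mul_sum]
    apply Finset.sum_congr rfl
    intro l _
    linear_combination (starRingEnd ℂ) (y l) * hP' j l
  have hxj : x j ≠ 0 := by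
    intro h
    have := hP' i j
    rw [h, zero_mul] at this
    exact (mul_ne_zero hi hj) this
  have h2 := (mul_eq_zero.1 h1).resolve_left hxj
  have h3 : (∑ i, ‖y i‖ ^ 2 : ℝ) = 0 := by
    have : ((∑ i, ‖y i‖ ^ 2 : ℝ) : ℂ) = 0 := by
      rw [← h2]; push_cast
      apply Finset.sum_congr rfl
      intro l _
      rw [Complex.mul_conj']
    exact_mod_cast this
  rw [Finset.sum_eq_zero_iff_of_nonneg (fun _ _ => by positivity)] at h3
  have := h3 j (Finset.mem_univ _)
  simp at this
  exact hj this

/-- The sign of the second character. -/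
def sgn (c : ℕ) : ℝ := if c = 0 then -1 else 1

theorem form_equivariant (k c : ℕ) (x y : Fin k → ℂ) (s t : ℝ) :
    form k c (fun i => ee s * x i) (fun i => ee t * y i) = ee (s + sgn c * t) * form k c x y := by
  unfold form sgn
  split_ifs with h
  · rw [Finset.mul_sum]
    apply Finset.sum_congr rfl
    intro i _
    rw [ee_add, map_mul, ee_neg_conj, neg_one_mul]; ring
  · rw [Finset.mul_sum]
    apply Finset.sum_congr rfl
    intro i _
    rw [ee_add, one_mul]; ring

theorem continuous_form {X : Type*} [TopologicalSpace X] (k c : ℕ) {f g : X → Fin k → ℂ}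
    (hf : Continuous f) (hg : Continuous g) : Continuous fun a => form k c (f a) (g a) := by
  unfold form
  have h1 : ∀ i, Continuous fun a => f a i := fun i => (continuous_apply i).comp hf
  have h2 : ∀ i, Continuous fun a => g a i := fun i => (continuous_apply i).comp hg
  split_ifs
  · exact continuous_finsetSum _ fun i _ => (h1 i).mul (Complex.continuous_conj.comp (h2 i))
  · exact continuous_finsetSum _ fun i _ => ((h1 _).mul (h2 _)).sub ((h1 _).mul (h2 _))

/-- The open set of good values. -/
def goodSet (q : ℕ) : Set ℂ := {v | (v ^ q).re < -(1 / 2) * ‖v‖ ^ q}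

theorem isOpen_goodSet (q : ℕ) : IsOpen (goodSet q) :=
  isOpen_lt (by fun_prop) (by fun_prop)

theorem goodSet_mul {q : ℕ} {v : ℂ} {y : ℝ} (hy : ∃ n : ℤ, q * y = n) (h : v ∈ goodSet q) :
    ee y * v ∈ goodSet q := by
  unfold goodSet at *
  rw [Set.mem_ofPred_eq] at *
  rw [mul_pow, ee_pow, (ee_eq_one_iff _).2 hy, one_mul, norm_mul, norm_ee, one_mul]
  exact h

theorem mem_goodSet {q : ℕ} (hq : Odd q) {R : ℝ} (hR : 0 < R) {y : ℝ}
    (hy : y = 1 / (2 * q) ∨ y = -(1 / (2 * q))) : (R : ℂ) * ee y ∈ goodSet q := by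
  unfold goodSet
  have hq0 : (q : ℝ) ≠ 0 := by
    have := hq.pos
    positivity
  have hpow : ee y ^ q = -1 := by
    rw [ee_pow]
    rcases hy with rfl | rfl
    · rw [← ee_half]; congr 1; field_simp
    · have : (q : ℝ) * -(1 / (2 * q)) = 1 / 2 + ((-1 : ℤ) : ℝ) := by
        push_cast; field_simp; norm_num
      rw [this, ee_add_int, ee_half]
  rw [Set.mem_ofPred_eq, mul_pow, hpow, norm_mul, norm_ee, ← Complex.ofReal_pow,
    mul_neg_one, Complex.neg_re, Complex.ofReal_re, mul_one, Complex.norm_real, Real.norm_eq_abs,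
    abs_of_pos hR]
  have : 0 < R ^ q := by positivity
  linarith

/-- At a special point all forms are good. -/
theorem form_special {k q : ℕ} (hk : 2 ≤ k) (hq : Odd q) {ρ : ℝ} (hρ : 0 < ρ)
    {d : Fin k → ℝ} {X Y : ℝ} (hX : Y < X) (hY : 0 < Y)
    (hd : ∀ i : Fin k, d i = if (i : ℕ) = 0 then X else if (i : ℕ) = k - 1 then -Y else 0)
    {c : ℕ} (hc : c < 2 * k - 2) :
    form k c (fun i => (d i : ℂ)) (fun _ => (ρ : ℂ) * ee (1 / (2 * q))) ∈ goodSet q := by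
  have hX0 : 0 < X := hY.trans hX
  unfold form
  split_ifs with h0
  · have hsum : ∑ i, d i = X - Y := by
      rw [Finset.sum_eq_add (⟨0, by omega⟩ : Fin k) (⟨k - 1, by omega⟩ : Fin k)]
      · rw [hd, hd, if_pos rfl, if_neg (by simp; omega), if_pos rfl]; ring
      · intro h; rw [Fin.mk.injEq] at h; omega
      · intro i _ hi
        rw [hd, if_neg, if_neg]
        · intro h; exact hi.2 (Fin.ext h)
        · intro h; exact hi.1 (Fin.ext h)
      · simp
      · simp
    have : ∑ i, (d i : ℂ) * (starRingEnd ℂ) ((ρ : ℂ) * ee (1 / (2 * q)))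
        = (((X - Y) * ρ : ℝ) : ℂ) * ee (-(1 / (2 * q))) := by
      rw [← Finset.sum_mul, map_mul, ee_neg_conj, Complex.conj_ofReal, ← Complex.ofReal_sum, hsum]
      push_cast; ring
    rw [this]
    exact mem_goodSet hq (mul_pos (by linarith) hρ) (Or.inr rfl)
  · have : ∀ F : Finset (Fin k × Fin k), ∑ a ∈ F, ((d a.1 : ℂ) * ((ρ : ℂ) * ee (1 / (2 * q)))
          - (d a.2 : ℂ) * ((ρ : ℂ) * ee (1 / (2 * q))))
        = (((∑ a ∈ F, (d a.1 - d a.2)) * ρ : ℝ) : ℂ) * ee (1 / (2 * q)) := by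
      intro F
      push_cast
      rw [Finset.sum_mul, Finset.sum_mul]
      apply Finset.sum_congr rfl
      intro a _
      ring
    rw [this]
    refine mem_goodSet hq (mul_pos ?_ hρ) (Or.inl rfl)
    apply Finset.sum_pos'
    · rintro ⟨i, j⟩ hij
      simp only [Finset.mem_filter, Finset.mem_univ, true_and] at hij
      have h1 : (i : ℕ) < j := hij.1
      have h2 := j.2
      rw [hd, hd]
      dsimp only
      split_ifs <;> first | omega | linarith
    · by_cases hck : c ≤ k - 1
      · refine ⟨(⟨0, by omega⟩, ⟨c, by omega⟩), ?_, ?_⟩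
        · simp only [Finset.mem_filter, Finset.mem_univ, true_and, Fin.mk_lt_mk]
          omega
        · rw [hd, hd]
          simp only [h0, if_true, if_false]
          split_ifs <;> linarith
      · refine ⟨(⟨c - (k - 1), by omega⟩, ⟨k - 1, by omega⟩), ?_, ?_⟩
        · simp only [Finset.mem_filter, Finset.mem_univ, true_and, Fin.mk_lt_mk]
          omega
        · rw [hd, hd]
          simp only [if_true]
          rw [if_neg (by omega), if_neg (by omega), if_neg (by omega)]
          linarith

/-! ### The hat map -/

/-- The unit sphere in `ℂ^k`. -/
abbrev Sph (k : ℕ) := Metric.sphere (0 : EuclideanSpace ℂ (Fin k)) 1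

theorem sph_sum {k : ℕ} (x : Sph k) : ∑ j, ‖x.1 j‖ ^ 2 = 1 := by
  have h : ‖x.1‖ = 1 := by simp
  rw [← EuclideanSpace.norm_sq_eq, h, one_pow]

theorem mem_sph {k : ℕ} (v : Fin k → ℂ) (h : ∑ j, ‖v j‖ ^ 2 = 1) :
    WithLp.toLp 2 v ∈ Metric.sphere (0 : EuclideanSpace ℂ (Fin k)) 1 := by
  rw [mem_sphere_zero_iff_norm, EuclideanSpace.norm_eq]
  simp [h]

/-- The rotation by the `m`-th power of the generator. -/
noncomputable def rot {k : ℕ} (p : ℕ) (ℓ : Fin k → ℤ) (m : ℤ) (x : Sph k) : Sph k :=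
  ⟨WithLp.toLp 2 (fun j => ee (m * ℓ j / p) * x.1 j), mem_sph _ (by
    simp only [norm_mul, norm_ee, one_mul]; exact sph_sum x)⟩

theorem rot_apply {k : ℕ} (p : ℕ) (ℓ : Fin k → ℤ) (m : ℤ) (x : Sph k) (j : Fin k) :
    (rot p ℓ m x).1 j = ee (m * ℓ j / p) * x.1 j := rfl

theorem lensRel_iff {k : ℕ} (p : ℕ) (ℓ : Fin k → ℤ) (x y : Sph k) :
    lensRel p k ℓ x y ↔ ∃ m : ℤ, y = rot p ℓ m x := by
  have h : ∀ (m : ℤ) (j : Fin k),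
      Complex.exp (2 * Real.pi * Complex.I * m * ℓ j / p) = ee (m * ℓ j / p) := by
    intro m j
    unfold ee; congr 1; push_cast; ring
  unfold lensRel
  apply exists_congr
  intro m
  simp only [h]
  constructor
  · intro hh
    apply Subtype.ext
    ext j
    exact hh j
  · rintro rfl j
    rfl

theorem rot_add {k : ℕ} (p : ℕ) (ℓ : Fin k → ℤ) (m m' : ℤ) (x : Sph k) :
    rot p ℓ m (rot p ℓ m' x) = rot p ℓ (m + m') x := by
  apply Subtype.ext
  ext j
  rw [rot_apply, rot_apply, rot_apply, ← mul_assoc, ← ee_add]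
  congr 2; push_cast; ring

theorem rot_of_dvd {k : ℕ} {p : ℕ} (hp : 0 < p) (ℓ : Fin k → ℤ) {m : ℤ} (h : (p : ℤ) ∣ m)
    (x : Sph k) : rot p ℓ m x = x := by
  apply Subtype.ext
  ext j
  obtain ⟨b, rfl⟩ := h
  have hp0 : (p : ℝ) ≠ 0 := by positivity
  rw [rot_apply, (ee_eq_one_iff _).2 ⟨b * ℓ j, by push_cast; field_simp⟩, one_mul]

theorem continuous_rot {k : ℕ} (p : ℕ) (ℓ : Fin k → ℤ) (m : ℤ) : Continuous (rot p ℓ m) := by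
  unfold rot
  refine Continuous.subtype_mk ?_ _
  refine (PiLp.continuous_toLp 2 _).comp ?_
  fun_prop

theorem exists_inv {p : ℕ} (hp : 2 ≤ p) {l : ℤ} (h : IsCoprime l (p : ℤ)) :
    ∃ a : ℕ, 1 ≤ a ∧ a ≤ p ∧ ∃ b : ℤ, (a : ℤ) * l = 1 + p * b := by
  obtain ⟨u, v, huv⟩ := h
  have hp0 : (0 : ℤ) < p := by omega
  have h0 := Int.emod_nonneg u hp0.ne'
  have h1 := Int.emod_lt_of_pos u hp0
  have h2 := Int.emod_add_mul_ediv u p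
  have hcast : ((u % p).toNat : ℤ) = u % p := Int.toNat_of_nonneg h0
  have hb : (u % p) * l = 1 + p * (-v - (u / p) * l) := by
    have : u % p = u - p * (u / p) := by linarith
    rw [this]; linear_combination huv
  refine ⟨(u % p).toNat, ?_, by omega, _, by rw [hcast]; exact hb⟩
  by_contra hlt
  have h3 : u % p = 0 := by omega
  rw [h3, zero_mul] at hb
  have h4 : (p : ℤ) ∣ 1 := ⟨-(-v - (u / p) * l), by linarith⟩
  have := Int.le_of_dvd one_pos h4
  omega

theorem exists_hat {k : ℕ} (hk : 2 ≤ k) {p : ℕ} (hp : 2 ≤ p) (ℓ : Fin k → ℤ)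
    (hℓ : ∀ j, IsCoprime (ℓ j) (p : ℤ)) :
    ∃ H : Sph k → Fin k → ℂ, Continuous H ∧ (∀ z, H z ≠ 0) ∧
      (∀ (m : ℤ) z, H (rot p ℓ m z) = fun j => ee (m / p) * H z j) ∧
      (∃ (z₀ : Sph k) (d : Fin k → ℝ) (X Y : ℝ), Y < X ∧ 0 < Y ∧ (∀ i : Fin k, d i =
        if (i : ℕ) = 0 then X else if (i : ℕ) = k - 1 then -Y else 0) ∧
        H z₀ = fun j => (d j : ℂ)) ∧
      (∃ (w₀ : Sph k) (ρ : ℝ), 0 < ρ ∧ H w₀ = fun _ => (ρ : ℂ) * ee (1 / (2 * p))) := by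
  have hp0 : (p : ℝ) ≠ 0 := by positivity
  choose a ha1 hap b hb using fun j => exists_inv hp (hℓ j)
  have hpol : ∀ (j : Fin k) (r x : ℝ), 0 ≤ r →
      ((r : ℂ) * ee x) ^ a j * (‖(r : ℂ) * ee x‖ : ℂ) ^ (p - a j) = ((r ^ p : ℝ) : ℂ) * ee (a j * x) := by
    intro j r x hr
    have hn : ‖(r : ℂ) * ee x‖ = r := by
      rw [norm_mul, norm_ee, mul_one, Complex.norm_real, Real.norm_eq_abs, abs_of_nonneg hr]
    rw [hn, mul_pow, ee_pow]
    have : (r : ℂ) ^ p = (r : ℂ) ^ a j * (r : ℂ) ^ (p - a j) := by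
      rw [← pow_add, Nat.add_sub_cancel' (hap j)]
    push_cast
    rw [this]; ring
  refine ⟨fun z j => (z.1 j) ^ a j * (‖z.1 j‖ : ℂ) ^ (p - a j), ?_, ?_, ?_, ?_, ?_⟩
  · refine continuous_pi fun j => ?_
    have : Continuous fun z : Sph k => z.1 j := by fun_prop
    fun_prop
  · intro z h
    have hz : ∀ j, z.1 j = 0 := by
      intro j
      have := congrFun h j
      simp only [Pi.zero_apply, mul_eq_zero] at this
      rcases this with h | h
      · exact pow_eq_zero_iff (by have := ha1 j; omega) |>.1 h
      · have := eq_zero_of_pow_eq_zero h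
        simpa using this
    have := sph_sum z
    simp [hz] at this
  · intro m z
    funext j
    dsimp only
    rw [rot_apply, norm_mul, norm_ee, one_mul, mul_pow, ee_pow]
    have : (a j : ℝ) * (m * ℓ j / p) = m / p + ((m * b j : ℤ) : ℝ) := by
      have h1 : (a j : ℝ) * ℓ j = 1 + p * b j := by exact_mod_cast hb j
      push_cast
      field_simp
      linear_combination (m : ℝ) * h1
    rw [this, ee_add_int]; ring
  · have h5 : (0 : ℝ) < √5 := by positivity
    have hsq : √5 ^ 2 = 5 := Real.sq_sqrt (by norm_num)
    let r : Fin k → ℝ := fun i => if (i : ℕ) = 0 then 2 / √5 else if (i : ℕ) = k - 1 then 1 / √5 else 0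
    let x : Fin k → ℝ := fun i => if (i : ℕ) = 0 then 0 else 1 / (2 * a i)
    have hr : ∀ i, 0 ≤ r i := by
      intro i
      dsimp only [r]
      split_ifs <;> positivity
    have hsum : ∑ i, r i ^ 2 = 1 := by
      rw [Finset.sum_eq_add (⟨0, by omega⟩ : Fin k) (⟨k - 1, by omega⟩ : Fin k)]
      · dsimp only [r]
        rw [if_pos rfl, if_neg (by omega), if_pos rfl, div_pow, div_pow, hsq]; norm_num
      · intro h; rw [Fin.mk.injEq] at h; omega
      · intro i _ hi
        dsimp only [r]
        rw [if_neg, if_neg]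
        · norm_num
        · intro h; exact hi.2 (Fin.ext h)
        · intro h; exact hi.1 (Fin.ext h)
      · simp
      · simp
    refine ⟨⟨WithLp.toLp 2 (fun i => (r i : ℂ) * ee (x i)), mem_sph _ ?_⟩,
      fun i => if (i : ℕ) = 0 then (2 / √5) ^ p else if (i : ℕ) = k - 1 then -((1 / √5) ^ p) else 0,
      (2 / √5) ^ p, (1 / √5) ^ p, ?_, by positivity, fun _ => rfl, ?_⟩
    · rw [← hsum]
      apply Finset.sum_congr rfl
      intro i _
      rw [norm_mul, norm_ee, mul_one, Complex.norm_real, Real.norm_eq_abs, sq_abs]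
    · gcongr
      norm_num
    · funext j
      change ((r j : ℂ) * ee (x j)) ^ a j * (‖(r j : ℂ) * ee (x j)‖ : ℂ) ^ (p - a j) = _
      rw [hpol j _ _ (hr j)]
      have haj : (a j : ℝ) ≠ 0 := by have := ha1 j; positivity
      dsimp only [r, x]
      by_cases h0 : (j : ℕ) = 0
      · simp only [h0, if_true, mul_zero, ee_zero, mul_one]
      · have : (a j : ℝ) * (1 / (2 * a j)) = 1 / 2 := by field_simp
        simp only [h0, if_false, this, ee_half]
        split_ifs
        · push_cast; ring
        · rw [zero_pow (by omega)]; simp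
  · have hk0 : (0 : ℝ) < √k := by positivity
    refine ⟨⟨WithLp.toLp 2 (fun i => ((1 / √k : ℝ) : ℂ) * ee (1 / (2 * p * a i))), mem_sph _ ?_⟩,
      (1 / √k) ^ p, by positivity, ?_⟩
    · simp only [norm_mul, norm_ee, mul_one, Complex.norm_real, Real.norm_eq_abs, sq_abs]
      rw [Finset.sum_const, div_pow, Real.sq_sqrt (by positivity)]
      simp
      field_simp
    · funext j
      change (((1 / √k : ℝ) : ℂ) * ee (1 / (2 * p * a j))) ^ a j *
        (‖((1 / √k : ℝ) : ℂ) * ee (1 / (2 * p * a j))‖ : ℂ) ^ (p - a j) = _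
      rw [hpol j _ _ (by positivity)]
      have haj : (a j : ℝ) ≠ 0 := by have := ha1 j; positivity
      congr 2
      field_simp

/-! ### Topology -/

theorem nullhomotopic_of_ne {k : ℕ} {Y : Type*} [TopologicalSpace Y] (f : C(Y, Sph k)) (v : Sph k)
    (h : ∀ y, f y ≠ v) : ContinuousMap.Nullhomotopic f := by
  let g : unitInterval × Y → EuclideanSpace ℂ (Fin k) :=
    fun a => (1 - (a.1 : ℝ)) • (f a.2).1 - (a.1 : ℝ) • v.1
  have hnorm : ∀ x : Sph k, ‖x.1‖ = 1 := fun x => by simp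
  have hg : Continuous g := by
    dsimp only [g]
    fun_prop
  have hg0 : ∀ a, g a ≠ 0 := by
    intro a h0
    have h1 : (1 - (a.1 : ℝ)) • (f a.2).1 = (a.1 : ℝ) • v.1 := sub_eq_zero.1 h0
    have h2 := congrArg norm h1
    have ha0 := a.1.2.1
    have ha1 := a.1.2.2
    rw [norm_smul, norm_smul, hnorm, hnorm, mul_one, mul_one, Real.norm_eq_abs, Real.norm_eq_abs,
      abs_of_nonneg (by linarith), abs_of_nonneg ha0] at h2
    have h3 : (a.1 : ℝ) ≠ 0 := by intro h; linarith
    rw [h2] at h1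
    exact h a.2 (Subtype.ext (smul_right_injective _ h3 h1))
  have hw : Continuous fun a => (‖g a‖⁻¹ : ℝ) • g a :=
    (hg.norm.inv₀ fun a => norm_ne_zero_iff.2 (hg0 a)).smul hg
  have hm : ∀ a, (‖g a‖⁻¹ : ℝ) • g a ∈ Metric.sphere (0 : EuclideanSpace ℂ (Fin k)) 1 := by
    intro a
    rw [mem_sphere_zero_iff_norm, norm_smul, norm_inv, norm_norm,
      inv_mul_cancel₀ (norm_ne_zero_iff.2 (hg0 a))]
  refine ⟨-v, ⟨⟨⟨fun a => ⟨(‖g a‖⁻¹ : ℝ) • g a, hm a⟩, hw.subtype_mk _⟩, ?_, ?_⟩⟩⟩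
  · intro y
    apply Subtype.ext
    simp [g, hnorm]
  · intro y
    apply Subtype.ext
    simp [g, hnorm]

theorem nullhomotopic_of_sheet {M X : Type*} [TopologicalSpace M] [TopologicalSpace X] {π : M → X}
    (hπ : Continuous π) (ho : IsOpenMap π) {V : Set M} (hV : IsOpen V) (hinj : Set.InjOn π V)
    (hnull : ContinuousMap.Nullhomotopic (⟨Subtype.val, continuous_subtype_val⟩ : C(V, M))) :
    ContinuousMap.Nullhomotopic
      (⟨Subtype.val, continuous_subtype_val⟩ : C((π '' V : Set X), X)) := by
  let f : V → (π '' V : Set X) := fun v => ⟨π v.1, Set.mem_image_of_mem _ v.2⟩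
  have hf : Function.Bijective f := by
    constructor
    · intro a b hab
      exact Subtype.ext (hinj a.2 b.2 (congrArg Subtype.val hab))
    · rintro ⟨_, m, hm, rfl⟩
      exact ⟨⟨m, hm⟩, rfl⟩
  have hfc : Continuous f := by
    dsimp only [f]
    exact Continuous.subtype_mk (hπ.comp continuous_subtype_val) _
  have hfo : IsOpenMap f := by
    intro s hs
    have h1 : IsOpen (π '' (Subtype.val '' s)) := ho _ (hV.isOpenMap_subtype_val s hs)
    convert h1.preimage (continuous_subtype_val : Continuous (Subtype.val : (π '' V : Set X) → X))
      using 1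
    ext ⟨x, hx⟩
    constructor
    · rintro ⟨v, hv, hvx⟩
      exact ⟨v.1, ⟨v, hv, rfl⟩, congrArg Subtype.val hvx⟩
    · rintro ⟨_, ⟨v, hv, rfl⟩, hvx⟩
      exact ⟨v, hv, Subtype.ext hvx⟩
  let e : V ≃ₜ (π '' V : Set X) :=
    (Equiv.ofBijective f hf).toHomeomorphOfContinuousOpen hfc hfo
  have key : (⟨Subtype.val, continuous_subtype_val⟩ : C((π '' V : Set X), X))
      = ((⟨π, hπ⟩ : C(M, X)).comp (⟨Subtype.val, continuous_subtype_val⟩ : C(V, M))).comp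
        (⟨e.symm, e.symm.continuous⟩ : C((π '' V : Set X), V)) := by
    ext x
    change x.1 = π (e.symm x).1
    have : f (e.symm x) = x := e.apply_symm_apply x
    exact (congrArg Subtype.val this).symm
  rw [key]
  exact (hnull.comp_right _).comp_left _

/-- The projection to the lens space. -/
def lensMk {k : ℕ} (p : ℕ) (ℓ : Fin k → ℤ) (x : Sph k) : LensSpace p k ℓ := Quot.mk _ x

theorem lensMk_eq {k : ℕ} (p : ℕ) (ℓ : Fin k → ℤ) (hp : 0 < p) {x y : Sph k}
    (h : lensMk p ℓ x = lensMk p ℓ y) : ∃ m : ℤ, y = rot p ℓ m x := by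
  have heq : Equivalence (lensRel p k ℓ) := by
    constructor
    · intro x
      exact (lensRel_iff _ _ _ _).2 ⟨0, (rot_of_dvd hp ℓ (dvd_zero _) x).symm⟩
    · intro x y h
      obtain ⟨m, rfl⟩ := (lensRel_iff _ _ _ _).1 h
      refine (lensRel_iff _ _ _ _).2 ⟨-m, ?_⟩
      rw [rot_add, neg_add_cancel]
      exact (rot_of_dvd hp ℓ (dvd_zero _) x).symm
    · intro x y z h h'
      obtain ⟨m, rfl⟩ := (lensRel_iff _ _ _ _).1 h
      obtain ⟨m', rfl⟩ := (lensRel_iff _ _ _ _).1 h'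
      exact (lensRel_iff _ _ _ _).2 ⟨m' + m, rot_add _ _ _ _ _⟩
  have h1 : Relation.EqvGen (lensRel p k ℓ) x y := Quot.eqvGen_exact h
  rw [heq.eqvGen_iff] at h1
  exact (lensRel_iff _ _ _ _).1 h1

theorem lensMk_rot {k : ℕ} (p : ℕ) (ℓ : Fin k → ℤ) (m : ℤ) (x : Sph k) :
    lensMk p ℓ (rot p ℓ m x) = lensMk p ℓ x :=
  (Quot.sound ((lensRel_iff _ _ _ _).2 ⟨m, rfl⟩)).symm

theorem continuous_lensMk {k : ℕ} (p : ℕ) (ℓ : Fin k → ℤ) : Continuous (lensMk p ℓ) :=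
  continuous_quot_mk

theorem isOpenMap_lensMk {k : ℕ} (p : ℕ) (hp : 0 < p) (ℓ : Fin k → ℤ) :
    IsOpenMap (lensMk p ℓ) := by
  intro V hV
  have hq : Topology.IsQuotientMap (lensMk p ℓ) := isQuotientMap_quot_mk
  rw [← hq.isOpen_preimage]
  have : lensMk p ℓ ⁻¹' (lensMk p ℓ '' V) = ⋃ m : ℤ, rot p ℓ m ⁻¹' V := by
    ext x
    simp only [Set.mem_preimage, Set.mem_image, Set.mem_iUnion]
    constructor
    · rintro ⟨y, hy, hxy⟩
      obtain ⟨m, rfl⟩ := lensMk_eq p ℓ hp hxy.symm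
      exact ⟨m, hy⟩
    · rintro ⟨m, hm⟩
      exact ⟨_, hm, lensMk_rot _ _ _ _⟩
  rw [this]
  exact isOpen_iUnion fun m => hV.preimage (continuous_rot _ _ _)

theorem sheet_null {k p q : ℕ} (hp : 0 < p) (hq : 0 < q) (ℓ ℓ' : Fin k → ℤ)
    {V : Set (Sph k × Sph k)} (hV : IsOpen V)
    (hs : ∀ z w s t, (z, w) ∈ V → (rot p ℓ s z, rot q ℓ' t w) ∈ V → (p : ℤ) ∣ s ∧ (q : ℤ) ∣ t)
    (hz : ∃ z₁, ∀ m ∈ V, m.1 ≠ z₁) (hw : ∃ w₁, ∀ m ∈ V, m.2 ≠ w₁) :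
    IsOpen (Prod.map (lensMk p ℓ) (lensMk q ℓ') '' V) ∧
    ContinuousMap.Nullhomotopic (⟨Subtype.val, continuous_subtype_val⟩ :
      C((Prod.map (lensMk p ℓ) (lensMk q ℓ') '' V : Set _), LensSpace p k ℓ × LensSpace q k ℓ')) := by
  have ho : IsOpenMap (Prod.map (lensMk p ℓ) (lensMk q ℓ')) :=
    (isOpenMap_lensMk p hp ℓ).prodMap (isOpenMap_lensMk q hq ℓ')
  refine ⟨ho _ hV, nullhomotopic_of_sheet
    ((continuous_lensMk p ℓ).prodMap (continuous_lensMk q ℓ')) ho hV ?_ ?_⟩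
  · rintro ⟨z, w⟩ hm ⟨z', w'⟩ hm' heq
    have h1 := congrArg Prod.fst heq
    have h2 := congrArg Prod.snd heq
    obtain ⟨s, rfl⟩ := lensMk_eq p ℓ hp h1
    obtain ⟨t, rfl⟩ := lensMk_eq q ℓ' hq h2
    obtain ⟨hps, hqt⟩ := hs z w s t hm hm'
    rw [rot_of_dvd hp ℓ hps, rot_of_dvd hq ℓ' hqt]
  · obtain ⟨z₁, hz⟩ := hz
    obtain ⟨w₁, hw⟩ := hw
    obtain ⟨z₂, h1⟩ := nullhomotopic_of_ne
      (⟨fun m : V => m.1.1, by fun_prop⟩ : C(V, Sph k)) z₁ (fun m => hz m.1 m.2)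
    obtain ⟨w₂, h2⟩ := nullhomotopic_of_ne
      (⟨fun m : V => m.1.2, by fun_prop⟩ : C(V, Sph k)) w₁ (fun m => hw m.1 m.2)
    exact ⟨(z₂, w₂), h1.prodMk h2⟩

theorem exists_nbhd {k p N : ℕ} (hp : 0 < p) (hN : 2 ≤ N) (hpN : p ∣ N) (ℓ : Fin k → ℤ)
    {H : Sph k → Fin k → ℂ} (hc : Continuous H)
    (hH : ∀ (m : ℤ) z, H (rot p ℓ m z) = fun j => ee (m / p) * H z j)
    (z₀ : Sph k) (j₀ : Fin k) {r x : ℝ} (hr : 0 < r) (h0 : H z₀ j₀ = (r : ℂ) * ee x) :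
    ∃ O : Set (Sph k), IsOpen O ∧ z₀ ∈ O ∧
      ∀ (s : ℤ) z, z ∈ O → rot p ℓ s z ∈ O → (p : ℤ) ∣ s := by
  have hp0 : (p : ℝ) ≠ 0 := by positivity
  refine ⟨{z | ee (-x) * H z j₀ ∈ sec N}, ?_, ?_, ?_⟩
  · exact (isOpen_sec hN).preimage (continuous_const.mul ((continuous_apply j₀).comp hc))
  · change ee (-x) * H z₀ j₀ ∈ sec N
    have : ee (-x) * H z₀ j₀ = (r : ℂ) * ee 0 := by
      rw [h0, ← neg_add_cancel x, ee_add]; ring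
    rw [this]
    exact mem_sec_polar hN hr (by rw [abs_zero]; positivity)
  · intro s z hz hz'
    change ee (-x) * H z j₀ ∈ sec N at hz
    change ee (-x) * H (rot p ℓ s z) j₀ ∈ sec N at hz'
    rw [hH, mul_left_comm] at hz'
    obtain ⟨b, rfl⟩ := hpN
    have h1 := sec_rigid hN ⟨b * s, by push_cast; field_simp⟩ hz hz'
    obtain ⟨m, hm⟩ := (ee_eq_one_iff _).1 h1
    refine ⟨m, ?_⟩
    rw [div_eq_iff hp0] at hm
    have : s = m * p := by exact_mod_cast hm
    rw [this, mul_comm]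

theorem exists_points {k : ℕ} (hk : 2 ≤ k) (ι : Type) [Finite ι] {O : Set (Sph k)} (hO : IsOpen O)
    (hne : O.Nonempty) : ∃ (pt : ι → Sph k) (B : ι → Set (Sph k)) (st : Sph k),
      (∀ i, IsOpen (B i) ∧ pt i ∈ B i ∧ B i ⊆ O ∧ st ∉ B i) ∧ st ∈ O ∧
      ∀ i j z, z ∈ B i → z ∈ B j → i = j := by
  obtain ⟨x, hx⟩ := hne
  have hrank : 1 < Module.rank ℝ (EuclideanSpace ℂ (Fin k)) := by
    have h1 : Module.finrank ℝ (EuclideanSpace ℂ (Fin k)) = 2 * k := by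
      rw [← Module.finrank_mul_finrank ℝ ℂ]
      simp
    rw [← Module.finrank_eq_rank, h1]
    exact_mod_cast (by omega : 1 < 2 * k)
  have hconn : ConnectedSpace (Sph k) := by
    apply isConnected_iff_connectedSpace.1
    exact (isPathConnected_sphere hrank 0 zero_le_one).isConnected
  have hnt : Nontrivial (Sph k) := by
    refine ⟨x, -x, ?_⟩
    intro h
    have h1 : x.1 = -x.1 := congrArg Subtype.val h
    have h2 : x.1 = 0 := by
      have h4 : (2 : ℝ) • x.1 = 0 := by
        rw [two_smul]; nth_rewrite 2 [h1]; exact add_neg_cancel _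
      exact (smul_eq_zero.1 h4).resolve_left two_ne_zero
    have h3 : ‖x.1‖ = 1 := by simp
    rw [h2, norm_zero] at h3
    exact zero_ne_one h3
  have hinf : O.Infinite := by
    have := ConnectedSpace.neBot_nhdsWithin_compl_of_nontrivial_of_t1space x
    exact infinite_of_mem_nhds x (hO.mem_nhds hx)
  obtain ⟨n, ⟨e⟩⟩ := Finite.exists_equiv_fin (Option ι)
  let emb := hinf.natEmbedding
  let pt : Option ι → Sph k := fun i => (emb (e i)).1
  have hpt : Function.Injective pt := by
    intro i j hij
    exact e.injective (Fin.ext (emb.injective (Subtype.ext hij)))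
  obtain ⟨U, hU, hd⟩ := (Set.finite_range pt).t2_separation
  have hdisj : ∀ i j z, z ∈ U (pt i) → z ∈ U (pt j) → i = j := by
    intro i j z h1 h2
    by_contra hij
    exact Set.disjoint_left.1 (hd ⟨i, rfl⟩ ⟨j, rfl⟩ (fun h => hij (hpt h))) h1 h2
  refine ⟨fun i => pt (some i), fun i => U (pt (some i)) ∩ O, pt none, ?_, (emb _).2, ?_⟩
  · intro i
    refine ⟨(hU _).2.inter hO, ⟨(hU _).1, (emb _).2⟩, Set.inter_subset_right, ?_⟩
    intro h
    exact absurd (hdisj _ _ _ h.1 (hU (pt none)).1) (by simp)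
  · intro i j z h1 h2
    exact Option.some_injective _ (hdisj _ _ _ h1.1 h2.1)

/-! ### Characters -/

theorem sgn_int (c : ℕ) : ∃ σ : ℤ, σ * σ = 1 ∧ sgn c = σ := by
  unfold sgn
  split_ifs
  · exact ⟨-1, by norm_num, by norm_num⟩
  · exact ⟨1, by norm_num, by norm_num⟩

theorem char_int {p q : ℕ} (hp : 0 < p) (hq : 0 < q) (c : ℕ) (s t : ℤ) :
    ∃ n : ℤ, ((p * q : ℕ) : ℝ) * ((s : ℝ) / p + sgn c * (t / q)) = n := by
  obtain ⟨σ, -, h⟩ := sgn_int c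
  rw [h]
  have hp0 : (p : ℝ) ≠ 0 := by positivity
  have hq0 : (q : ℝ) ≠ 0 := by positivity
  exact ⟨s * q + σ * t * p, by push_cast; field_simp⟩

theorem char_faithful {p q : ℕ} (hp : 0 < p) (hq : 0 < q) (hpq : Nat.Coprime p q) (c : ℕ) (s t : ℤ)
    (h1 : ee ((s : ℝ) / p + sgn c * (t / q)) = 1) : (p : ℤ) ∣ s ∧ (q : ℤ) ∣ t := by
  obtain ⟨σ, hσ, h⟩ := sgn_int c
  rw [h] at h1
  have hp0 : (p : ℝ) ≠ 0 := by positivity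
  have hq0 : (q : ℝ) ≠ 0 := by positivity
  obtain ⟨n, hn⟩ := (ee_eq_one_iff _).1 h1
  have h2 : s * q + σ * t * p = n * p * q := by
    have : (s * q + σ * t * p : ℝ) = n * p * q := by
      rw [← hn]; field_simp
    exact_mod_cast this
  have hcop : IsCoprime (p : ℤ) (q : ℤ) := Nat.isCoprime_iff_coprime.2 hpq
  constructor
  · exact hcop.dvd_of_dvd_mul_right ⟨n * q - σ * t, by linear_combination h2⟩
  · exact hcop.symm.dvd_of_dvd_mul_right
      ⟨σ * (n * p - s), by linear_combination σ * h2 - t * p * hσ⟩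

theorem char_surj {p q : ℕ} (hp : 0 < p) (hq : 0 < q) (hpq : Nat.Coprime p q) (c : ℕ) (j : ℤ) :
    ∃ s t : ℤ, (s : ℝ) / p + sgn c * (t / q) = j / ((p * q : ℕ) : ℝ) := by
  obtain ⟨σ, hσ, h⟩ := sgn_int c
  rw [h]
  have hp0 : (p : ℝ) ≠ 0 := by positivity
  have hq0 : (q : ℝ) ≠ 0 := by positivity
  obtain ⟨u, v, huv⟩ := Nat.isCoprime_iff_coprime.2 hpq
  refine ⟨j * v, σ * j * u, ?_⟩
  have e1 : (u * p + v * q : ℝ) = 1 := by exact_mod_cast huv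
  have e2 : (σ * σ : ℝ) = 1 := by exact_mod_cast hσ
  push_cast
  field_simp
  linear_combination (j : ℝ) * e1 + (j : ℝ) * u * p * e2

/-- For odd `n = 2k-1 ≥ 3` and odd relatively prime `p, q ≥ 2`,
`cat (L^n_p × L^n_q) ≤ 2n - 2`. -/
theorem lsCat_prod_lensSpace_le_of_odd (k : ℕ) (hk : 2 ≤ k) (n : ℕ) (hn : n = 2 * k - 1)
    (p q : ℕ) (hp2 : 2 ≤ p) (hq2 : 2 ≤ q) (hp : Odd p) (hq : Odd q) (hpq : Nat.Coprime p q)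
    (ℓ : Fin k → ℤ) (hℓ : ∀ j, IsCoprime (ℓ j) (p : ℤ))
    (ℓ' : Fin k → ℤ) (hℓ' : ∀ j, IsCoprime (ℓ' j) (q : ℤ)) :
    lsCat (LensSpace p k ℓ × LensSpace q k ℓ') ≤ 2 * n - 2 := by
  have hp3 : 3 ≤ p := by obtain ⟨a, ha⟩ := hp; omega
  have hp0 : 0 < p := by omega
  have hq0 : 0 < q := by omega
  have hN : 2 ≤ p * q := by nlinarith
  obtain ⟨H, hHc, hH0, hHr, ⟨z₀, d, X, Y, hXY, hY, hd, hz₀⟩, -⟩ := exists_hat hk hp2 ℓ hℓ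
  obtain ⟨H', hHc', hH0', hHr', -, ⟨w₀, ρ, hρ, hw₀⟩⟩ := exists_hat hk hq2 ℓ' hℓ'
  obtain ⟨F, hFdef⟩ : ∃ F : ℕ → Sph k → Sph k → ℂ, F = fun c z w => form k c (H z) (H' w) :=
    ⟨_, rfl⟩
  have hFc : ∀ c, Continuous fun m : Sph k × Sph k => F c m.1 m.2 := by
    intro c
    rw [hFdef]
    exact continuous_form k c (hHc.comp continuous_fst) (hHc'.comp continuous_snd)
  have hFr : ∀ c z w (s t : ℤ), F c (rot p ℓ s z) (rot q ℓ' t w)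
      = ee ((s : ℝ) / p + sgn c * (t / q)) * F c z w := by
    intro c z w s t
    rw [hFdef]
    dsimp only
    rw [hHr, hHr', form_equivariant]
  have hF0 : ∀ z w, ∃ c < 2 * k - 2, F c z w ≠ 0 := by
    intro z w
    rw [hFdef]
    exact exists_form_ne_zero hk (hH0 z) (hH0' w)
  have hFgood : ∀ c < 2 * k - 2, F c z₀ w₀ ∈ goodSet q := by
    intro c hc
    rw [hFdef]
    dsimp only
    rw [hz₀, hw₀]
    exact form_special hk hq hρ hXY hY hd hc
  obtain ⟨Oz, Ow, hOz, hOw, hzOz, hwOw, hO⟩ : ∃ Oz Ow : Set (Sph k), IsOpen Oz ∧ IsOpen Ow ∧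
      z₀ ∈ Oz ∧ w₀ ∈ Ow ∧ ∀ z ∈ Oz, ∀ w ∈ Ow, ∀ c < 2 * k - 2, F c z w ∈ goodSet q := by
    have hopen : IsOpen (⋂ c : Fin (2 * k - 2),
        {m : Sph k × Sph k | F c m.1 m.2 ∈ goodSet q}) :=
      isOpen_iInter_of_finite fun c => (isOpen_goodSet q).preimage (hFc c)
    obtain ⟨u, v, hu, hv, hzu, hwv, huv⟩ := isOpen_prod_iff.1 hopen z₀ w₀
      (Set.mem_iInter.2 fun c => hFgood c c.2)
    refine ⟨u, v, hu, hv, hzu, hwv, fun z hz w hw c hc => ?_⟩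
    exact Set.mem_iInter.1 (huv (Set.mk_mem_prod hz hw)) ⟨c, hc⟩
  have hk0 : 0 < k := by omega
  obtain ⟨Oz', hOz', hzOz', hrz⟩ := exists_nbhd hp0 hN (dvd_mul_right p q) ℓ hHc hHr z₀
    ⟨0, hk0⟩ (r := X) (x := 0) (hY.trans hXY) (by rw [hz₀, ee_zero, mul_one]; simp [hd])
  obtain ⟨Ow', hOw', hwOw', hrw⟩ := exists_nbhd hq0 hN (dvd_mul_left q p) ℓ' hHc' hHr' w₀
    ⟨0, hk0⟩ (r := ρ) (x := 1 / (2 * q)) hρ (by rw [hw₀])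
  obtain ⟨pz, B, sz, hB, hsz, hBd⟩ := exists_points hk (Fin (2 * k - 2) × Bool)
    (hOz.inter hOz') ⟨z₀, hzOz, hzOz'⟩
  obtain ⟨pw, B', sw, hB', hsw, hBd'⟩ := exists_points hk (Fin (2 * k - 2) × Bool)
    (hOw.inter hOw') ⟨w₀, hwOw, hwOw'⟩
  have rot0 : ∀ z, rot p ℓ 0 z = z := rot_of_dvd hp0 ℓ (dvd_zero _)
  have rot0' : ∀ w, rot q ℓ' 0 w = w := rot_of_dvd hq0 ℓ' (dvd_zero _)
  have claim : ∀ (c : Fin (2 * k - 2) × Bool) z w (t : ℤ), F c.1 z w ∈ secE (p * q) c.2 →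
      z ∈ Oz → rot q ℓ' t w ∉ Ow := by
    intro c z w t hs hz hw
    have hg := hO z hz _ hw c.1 c.1.2
    have e : F c.1 z (rot q ℓ' t w) = ee (sgn c.1 * (t / q)) * F c.1 z w := by
      have := hFr c.1 z w 0 t
      rwa [rot0, Int.cast_zero, zero_div, zero_add] at this
    have e' : F c.1 z w = ee (-(sgn c.1 * (t / q))) * F c.1 z (rot q ℓ' t w) := by
      rw [e, ← mul_assoc, ← ee_add, neg_add_cancel, ee_zero, one_mul]
    have hg' : F c.1 z w ∈ goodSet q := by
      rw [e']
      apply goodSet_mul _ hg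
      obtain ⟨σ, -, hσ⟩ := sgn_int c.1
      have hqr : (q : ℝ) ≠ 0 := by positivity
      rw [hσ]
      exact ⟨-(σ * t), by push_cast; field_simp⟩
    have h1 := secE_not_good hp3 (by omega : 1 ≤ q) hs
    exact absurd hg' (not_lt.2 h1)
  have rigid : ∀ (c : Fin (2 * k - 2) × Bool) z w (s t : ℤ), F c.1 z w ∈ secE (p * q) c.2 →
      F c.1 (rot p ℓ s z) (rot q ℓ' t w) ∈ secE (p * q) c.2 → (p : ℤ) ∣ s ∧ (q : ℤ) ∣ t := by
    intro c z w s t h h'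
    rw [hFr] at h'
    exact char_faithful hp0 hq0 hpq c.1 s t
      (secE_rigid hN c.2 (char_int hp0 hq0 c.1 s t) h h')
  let V : Option (Fin (2 * k - 2) × Bool) → Set (Sph k × Sph k) := fun o =>
    match o with
    | some c => {m | F c.1 m.1 m.2 ∈ secE (p * q) c.2 ∧ m.1 ≠ pz c ∧ m.2 ≠ pw c}
    | none => {m | ∃ c : Fin (2 * k - 2) × Bool, F c.1 m.1 m.2 ∈ secE (p * q) c.2 ∧
        (m.1 ∈ B c ∨ m.2 ∈ B' c)}
  have hV : ∀ o, IsOpen (Prod.map (lensMk p ℓ) (lensMk q ℓ') '' V o) ∧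
      ContinuousMap.Nullhomotopic (⟨Subtype.val, continuous_subtype_val⟩ :
        C((Prod.map (lensMk p ℓ) (lensMk q ℓ') '' V o : Set _),
          LensSpace p k ℓ × LensSpace q k ℓ')) := by
    intro o
    rcases o with _ | c
    · apply sheet_null hp0 hq0 ℓ ℓ'
      · have : V none = ⋃ c : Fin (2 * k - 2) × Bool,
            ({m | F c.1 m.1 m.2 ∈ secE (p * q) c.2} ∩
              (Prod.fst ⁻¹' (B c) ∪ Prod.snd ⁻¹' (B' c))) := by
          ext m
          rw [Set.mem_iUnion]
          rfl
        rw [this]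
        exact isOpen_iUnion fun c => ((isOpen_secE hN c.2).preimage (hFc c.1)).inter
          (((hB c).1.preimage continuous_fst).union ((hB' c).1.preimage continuous_snd))
      · rintro z w s t ⟨c, hc, hcB⟩ ⟨c', hc', hcB'⟩
        dsimp only at hc hcB hc' hcB'
        rcases hcB with hz | hw <;> rcases hcB' with hz' | hw'
        · have hs := hrz s z ((hB c).2.2.1 hz).2 ((hB c').2.2.1 hz').2
          have hzz := rot_of_dvd hp0 ℓ hs z
          rw [hzz] at hz'
          obtain rfl := hBd _ _ _ hz hz'
          exact rigid c z w s t hc hc'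
        · exact absurd ((hB' c').2.2.1 hw').1 (claim c z w t hc ((hB c).2.2.1 hz).1)
        · have h1 := claim c' _ _ (-t) hc' ((hB c').2.2.1 hz').1
          rw [rot_add, neg_add_cancel, rot0'] at h1
          exact absurd ((hB' c).2.2.1 hw).1 h1
        · have hs := hrw t w ((hB' c).2.2.1 hw).2 ((hB' c').2.2.1 hw').2
          have hww := rot_of_dvd hq0 ℓ' hs w
          rw [hww] at hw'
          obtain rfl := hBd' _ _ _ hw hw'
          exact rigid c z w s t hc hc'
      · refine ⟨sz, ?_⟩
        rintro ⟨z, w⟩ ⟨c, hc, hcB⟩ h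
        dsimp only at hc hcB h
        subst h
        rcases hcB with hz | hw
        · exact (hB c).2.2.2 hz
        · have h1 := claim c z w 0 hc hsz.1
          rw [rot0'] at h1
          exact h1 ((hB' c).2.2.1 hw).1
      · refine ⟨sw, ?_⟩
        rintro ⟨z, w⟩ ⟨c, hc, hcB⟩ h
        dsimp only at hc hcB h
        subst h
        rcases hcB with hz | hw
        · have h1 := claim c z w 0 hc ((hB c).2.2.1 hz).1
          rw [rot0'] at h1
          exact h1 hsw.1
        · exact (hB' c).2.2.2 hw
    · apply sheet_null hp0 hq0 ℓ ℓ'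
      · exact ((isOpen_secE hN c.2).preimage (hFc c.1)).inter
          ((isOpen_ne.preimage continuous_fst).inter (isOpen_ne.preimage continuous_snd))
      · intro z w s t h h'
        exact rigid c z w s t h.1 h'.1
      · exact ⟨pz c, fun m hm => hm.2.1⟩
      · exact ⟨pw c, fun m hm => hm.2.2⟩
  have hcover : ∀ x : LensSpace p k ℓ × LensSpace q k ℓ', ∃ o,
      x ∈ Prod.map (lensMk p ℓ) (lensMk q ℓ') '' V o := by
    rintro ⟨x, y⟩
    obtain ⟨z, rfl⟩ := Quot.exists_rep x
    obtain ⟨w, rfl⟩ := Quot.exists_rep y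
    obtain ⟨c, hc, hne⟩ := hF0 z w
    obtain ⟨j, ε, hj⟩ := secE_cover hN hne
    obtain ⟨s, t, hst⟩ := char_surj hp0 hq0 hpq c j
    rw [← hst, ← hFr] at hj
    have hm : Prod.map (lensMk p ℓ) (lensMk q ℓ') (rot p ℓ s z, rot q ℓ' t w)
        = (lensMk p ℓ z, lensMk q ℓ' w) :=
      Prod.ext (lensMk_rot p ℓ s z) (lensMk_rot q ℓ' t w)
    let cc : Fin (2 * k - 2) × Bool := (⟨c, hc⟩, ε)
    by_cases h1 : rot p ℓ s z = pz cc
    · exact ⟨none, _, ⟨cc, hj, Or.inl (by dsimp only; rw [h1]; exact (hB cc).2.1)⟩, hm⟩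
    by_cases h2 : rot q ℓ' t w = pw cc
    · exact ⟨none, _, ⟨cc, hj, Or.inr (by dsimp only; rw [h2]; exact (hB' cc).2.1)⟩, hm⟩
    exact ⟨some cc, _, ⟨hj, h1, h2⟩, hm⟩
  have hcard : Fintype.card (Option (Fin (2 * k - 2) × Bool)) = 2 * n - 2 + 1 := by
    simp only [Fintype.card_option, Fintype.card_prod, Fintype.card_fin, Fintype.card_bool]
    omega
  let e := Fintype.equivFinOfCardEq hcard
  apply Nat.sInf_le
  refine ⟨fun i => Prod.map (lensMk p ℓ) (lensMk q ℓ') '' V (e.symm i), fun i => (hV _).1, ?_,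
    fun i => (hV _).2⟩
  rw [Set.eq_univ_iff_forall]
  intro x
  obtain ⟨o, ho⟩ := hcover x
  rw [Set.mem_iUnion]
  exact ⟨e o, by rw [Equiv.symm_apply_apply]; exact ho⟩
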